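/- Let H be a real Hilbert space, n ≥ 2, and let u, v : [0, T) → H^n be two solutions of the ODE system du_i/dt = Σ_{j≠i} (u_j − u_i)/‖u_j − u_i‖, each with pairwise distinct coordinates at every time in [0, T), with initial values u(0) = x and v(0) = y. Then for every t ∈ [0, T), the Hausdorff distance between the sets {u₁(t),…,uₙ(t)} and {v₁(t),…,vₙ(t)} is at most √n · max_{1≤i≤n} ‖x_i − y_i‖. -/

import Mathlib

/-!
Regard `u` and `v` as curves in the `ℓ²` sum of copies of `H`. Since `z ↦ z / ‖z‖` is a subgradient
of the convex function `‖·‖`, it is monotone; it is also odd, so symmetrizing the double sum over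
pairs `(i, j)` shows that the vector field of the system is dissipative. Hence the `ℓ²` distance
between two solutions is nonincreasing. The factor `√n` is the cost of comparing the `ℓ²` distance
with the supremum distance, which in turn dominates the Hausdorff distance between ranges.
-/

open Finset WithLp
open scoped InnerProductSpace

section Metric

variable {ι X : Type*} [Fintype ι] [PseudoMetricSpace X]

lemma dist_pi_eq_iSup_dist (f g : ι → X) : dist f g = ⨆ i, dist (f i) (g i) :=
  le_antisymm
    ((dist_pi_le_iff (Real.iSup_nonneg fun _ => dist_nonneg)).2 fun i =>
      le_ciSup (f := fun i => dist (f i) (g i)) (Set.finite_range _).bddAbove i)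
    (Real.iSup_le (dist_le_pi_dist f g) dist_nonneg)

lemma hausdorffDist_range_le_dist (f g : ι → X) :
    Metric.hausdorffDist (Set.range f) (Set.range g) ≤ dist f g := by
  refine Metric.hausdorffDist_le_of_mem_dist dist_nonneg ?_ ?_
  · rintro _ ⟨i, rfl⟩
    exact ⟨g i, Set.mem_range_self i, dist_le_pi_dist f g i⟩
  · rintro _ ⟨i, rfl⟩
    exact ⟨f i, Set.mem_range_self i, dist_comm (f i) (g i) ▸ dist_le_pi_dist f g i⟩

end Metric

section InnerProductSpace

variable {ι H : Type*} [NormedAddCommGroup H] [InnerProductSpace ℝ H]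

lemma inner_normalize_sub_le_norm_sub_norm (a b : H) :
    ⟪NormedSpace.normalize a, b - a⟫_ℝ ≤ ‖b‖ - ‖a‖ := by
  rcases eq_or_ne a 0 with rfl | ha
  · simp
  have inner_self : ⟪NormedSpace.normalize a, a⟫_ℝ = ‖a‖ := by
    rw [NormedSpace.normalize, real_inner_smul_left, real_inner_self_eq_norm_sq]
    field_simp
  have inner_le : ⟪NormedSpace.normalize a, b⟫_ℝ ≤ ‖b‖ := by
    simpa [NormedSpace.norm_normalize ha] using real_inner_le_norm (NormedSpace.normalize a) b
  rw [inner_sub_right]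
  linarith

lemma inner_sub_normalize_sub_normalize_nonneg (a b : H) :
    0 ≤ ⟪a - b, NormedSpace.normalize a - NormedSpace.normalize b⟫_ℝ := by
  have hab := inner_normalize_sub_le_norm_sub_norm a b
  have hba := inner_normalize_sub_le_norm_sub_norm b a
  rw [← neg_sub, inner_neg_right] at hab
  rw [inner_sub_right, real_inner_comm, real_inner_comm (NormedSpace.normalize b)]
  linarith

lemma antitoneOn_norm_of_inner_nonpos {S : Set ℝ} (hS : Convex ℝ S) {w w' : ℝ → H}
    (hw : ∀ t ∈ S, HasDerivWithinAt w (w' t) S t) (hw' : ∀ t ∈ interior S, ⟪w t, w' t⟫_ℝ ≤ 0) :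
    AntitoneOn (fun t => ‖w t‖) S := by
  have antitoneOn_sq : AntitoneOn (fun t => ‖w t‖ ^ 2) S :=
    antitoneOn_of_hasDerivWithinAt_nonpos hS
      (fun t ht => (hw t ht).norm_sq.continuousWithinAt)
      (fun t ht => (hw t (interior_subset ht)).norm_sq.mono interior_subset)
      (fun t ht => mul_nonpos_of_nonneg_of_nonpos zero_le_two (hw' t ht))
  exact fun s hs t ht hst => le_of_sq_le_sq (antitoneOn_sq hs ht hst) (norm_nonneg _)

variable [Fintype ι]

lemma two_mul_sum_inner_sum_of_antisymm (w : ι → H) {G : ι → ι → H}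
    (hG : ∀ i j, G j i = -G i j) :
    2 * ∑ i, ⟪w i, ∑ j, G i j⟫_ℝ = -∑ i, ∑ j, ⟪w j - w i, G i j⟫_ℝ := by
  have swap : ∑ i, ∑ j, ⟪w j, G i j⟫_ℝ = -∑ i, ∑ j, ⟪w i, G i j⟫_ℝ := by
    rw [sum_comm]
    simp only [← sum_neg_distrib, ← inner_neg_right, ← hG]
  simp only [inner_sub_left, sum_sub_distrib, inner_sum]
  linarith

lemma sum_inner_sub_sum_nonpos_of_odd_of_monotone {φ : H → H} (hodd : φ.Odd)
    (hmono : ∀ a b, 0 ≤ ⟪a - b, φ a - φ b⟫_ℝ) (p q : ι → H) :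
    ∑ i, ⟪p i - q i, ∑ j, φ (p j - p i) - ∑ j, φ (q j - q i)⟫_ℝ ≤ 0 := by
  have antisymm (i j : ι) : φ (p i - p j) - φ (q i - q j) = -(φ (p j - p i) - φ (q j - q i)) := by
    rw [← neg_sub (p j), ← neg_sub (q j), hodd, hodd]
    abel
  have symmetrized := two_mul_sum_inner_sum_of_antisymm (fun i => p i - q i) antisymm
  have pair_nonneg (i j : ι) :
      0 ≤ ⟪p j - q j - (p i - q i), φ (p j - p i) - φ (q j - q i)⟫_ℝ := by
    simpa only [sub_sub_sub_comm] using hmono (p j - p i) (q j - q i)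
  have pair_sum_nonneg := sum_nonneg fun i (_ : i ∈ univ) =>
    sum_nonneg fun j (_ : j ∈ univ) => pair_nonneg i j
  simp only [← sum_sub_distrib]
  linarith

end InnerProductSpace

section Flow

variable {ι H : Type*} [Fintype ι] [DecidableEq ι] [NormedAddCommGroup H] [InnerProductSpace ℝ H]

/-- The vector field of the system: each point is attracted to every other one by a force of unit
length. At configurations with coinciding points, such pairs contribute `0`. -/
noncomputable def unitAttraction (p : ι → H) (i : ι) : H :=
  ∑ j ∈ univ.erase i, ‖p j - p i‖⁻¹ • (p j - p i)

/-- `u` solves the system `u' = unitAttraction u` on `S` without collisions; derivatives are taken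
within `S`, hence one-sided at its endpoints. -/
structure IsUnitAttractionFlowOn (u : ℝ → ι → H) (S : Set ℝ) : Prop where
  injective : ∀ t ∈ S, Function.Injective (u t)
  hasDerivWithinAt : ∀ t ∈ S, HasDerivWithinAt u (unitAttraction (u t)) S t

lemma unitAttraction_eq_sum_normalize (p : ι → H) (i : ι) :
    unitAttraction p i = ∑ j, NormedSpace.normalize (p j - p i) :=
  sum_erase _ (by simp)

lemma sum_inner_unitAttraction_sub_nonpos (p q : ι → H) :
    ∑ i, ⟪p i - q i, unitAttraction p i - unitAttraction q i⟫_ℝ ≤ 0 := by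
  simpa only [unitAttraction_eq_sum_normalize] using
    sum_inner_sub_sum_nonpos_of_odd_of_monotone NormedSpace.normalize_neg
      inner_sub_normalize_sub_normalize_nonneg p q

variable {S : Set ℝ} {u v : ℝ → ι → H}

lemma IsUnitAttractionFlowOn.antitoneOn_dist_toLp_two (hS : Convex ℝ S)
    (hu : IsUnitAttractionFlowOn u S) (hv : IsUnitAttractionFlowOn v S) :
    AntitoneOn (fun t => dist (toLp 2 (u t)) (toLp 2 (v t))) S := by
  simp only [dist_eq_norm, ← toLp_sub]
  refine antitoneOn_norm_of_inner_nonpos hS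
    (w' := fun t => toLp 2 (unitAttraction (u t) - unitAttraction (v t))) (fun t ht => ?_)
    fun t _ => ?_
  · exact (PiLp.hasFDerivAt_toLp 2 _).comp_hasDerivWithinAt t
      ((hu.hasDerivWithinAt t ht).sub (hv.hasDerivWithinAt t ht))
  · exact sum_inner_unitAttraction_sub_nonpos (u t) (v t)

theorem hausdorff_stability_along_flow_general (hS : Convex ℝ S)
    (hu : IsUnitAttractionFlowOn u S) (hv : IsUnitAttractionFlowOn v S) {s t : ℝ}
    (hs : s ∈ S) (ht : t ∈ S) (hst : s ≤ t) :
    Metric.hausdorffDist (Set.range (u t)) (Set.range (v t)) ≤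
      √(Fintype.card ι) * ⨆ i, ‖u s i - v s i‖ :=
  calc
    Metric.hausdorffDist (Set.range (u t)) (Set.range (v t))
    _ ≤ dist (u t) (v t) := hausdorffDist_range_le_dist _ _
    _ ≤ dist (toLp 2 (u t)) (toLp 2 (v t)) := by
      simpa using (PiLp.lipschitzWith_ofLp 2 fun _ : ι => H).dist_le_mul (toLp 2 (u t))
        (toLp 2 (v t))
    _ ≤ dist (toLp 2 (u s)) (toLp 2 (v s)) := hu.antitoneOn_dist_toLp_two hS hv hs ht hst
    _ ≤ √(Fintype.card ι) * dist (u s) (v s) := by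
      simpa [Real.sqrt_eq_rpow] using
        (PiLp.lipschitzWith_toLp 2 fun _ : ι => H).dist_le_mul (u s) (v s)
    _ = √(Fintype.card ι) * ⨆ i, ‖u s i - v s i‖ := by
      simp only [dist_pi_eq_iSup_dist (u s), dist_eq_norm]

end Flow

/-- **Inequality (9).** If `u, v : [0, T) → H^n` solve
`du_i/dt = ∑_{j ≠ i} (u_j − u_i)/‖u_j − u_i‖` with pairwise distinct coordinates and initial
values `x, y`, then for all `t ∈ [0, T)` the Hausdorff distance between `{u₁(t),…,uₙ(t)}` and
`{v₁(t),…,vₙ(t)}` is at most `√n · max_i ‖x_i − y_i‖`. -/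
theorem hausdorff_stability_along_flow
    {H : Type*} [NormedAddCommGroup H] [InnerProductSpace ℝ H] [CompleteSpace H]
    (n : ℕ) (hn : 2 ≤ n) (T : ℝ) (x y : Fin n → H) (u v : ℝ → Fin n → H)
    (hu0 : u 0 = x) (hv0 : v 0 = y)
    (hu_distinct : ∀ t ∈ Set.Ico (0 : ℝ) T, ∀ i j : Fin n, i ≠ j → u t i ≠ u t j)
    (hv_distinct : ∀ t ∈ Set.Ico (0 : ℝ) T, ∀ i j : Fin n, i ≠ j → v t i ≠ v t j)
    (hu_ode : ∀ t ∈ Set.Ico (0 : ℝ) T, ∀ i : Fin n,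
      HasDerivWithinAt (fun s => u s i)
        (∑ j ∈ Finset.univ.erase i, (‖u t j - u t i‖)⁻¹ • (u t j - u t i))
        (Set.Ico (0 : ℝ) T) t)
    (hv_ode : ∀ t ∈ Set.Ico (0 : ℝ) T, ∀ i : Fin n,
      HasDerivWithinAt (fun s => v s i)
        (∑ j ∈ Finset.univ.erase i, (‖v t j - v t i‖)⁻¹ • (v t j - v t i))
        (Set.Ico (0 : ℝ) T) t) :
    ∀ t ∈ Set.Ico (0 : ℝ) T,
      Metric.hausdorffDist (Set.range (u t)) (Set.range (v t)) ≤
        Real.sqrt n * sSup {d : ℝ | ∃ i : Fin n, d = ‖x i - y i‖} :=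
  fun t ht => by
    simpa [iSup, Set.range, eq_comm, hu0, hv0] using
      hausdorff_stability_along_flow_general (convex_Ico 0 T)
        ⟨fun s hs i j => not_imp_not.1 (hu_distinct s hs i j),
          fun s hs => hasDerivWithinAt_pi.2 (hu_ode s hs)⟩
        ⟨fun s hs i j => not_imp_not.1 (hv_distinct s hs i j),
          fun s hs => hasDerivWithinAt_pi.2 (hv_ode s hs)⟩
        (Set.left_mem_Ico.2 (ht.1.trans_lt ht.2)) ht ht.1
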